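/- arXiv:2404.05664 — 2 statements merged into one kernel-verified Lean document; each statement's English description precedes it below -/
import Mathlib

section
/- For fixed n and ℓ with 0 ≤ ℓ ≤ n, the expected dfsScore of a uniformly random node at level ℓ among all ordered trees with n edges equals (ℓ/(2ℓ+1)) * (n+ℓ+1). -/
open scoped Classical

/-- Height (number of up-steps minus number of down-steps) after the first `k` steps
of the word `w`, where `true` encodes an up-step and `false` a down-step. -/
def heightAt (n : ℕ) (w : Fin n → Bool) (k : ℕ) : ℤ :=
  ((Finset.univ.filter (fun i : Fin n => (i : ℕ) < k ∧ w i = true)).card : ℤ) -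
  ((Finset.univ.filter (fun i : Fin n => (i : ℕ) < k ∧ w i = false)).card : ℤ)

/-- `w` is a Dyck word of semilength `n` (the standard encoding of an ordered tree
with `n` edges via its pre-order traversal: `true` = step away from the root). -/
def IsDyck (n : ℕ) (w : Fin (2 * n) → Bool) : Prop :=
  (Finset.univ.filter (fun i : Fin (2 * n) => w i = true)).card = n ∧
  ∀ k : ℕ, k ≤ 2 * n → 0 ≤ heightAt (2 * n) w k

/-- The ordered trees with `n` edges, encoded as Dyck words. -/
noncomputable def dyckWords (n : ℕ) : Finset (Fin (2 * n) → Bool) :=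
  Finset.univ.filter (fun w => IsDyck n w)

/-- The nodes of the tree encoded by `w` : `none` is the root and `some i` for an
up-step `i` (`w i = true`) is the node this step leads to. -/
def isNode (n : ℕ) (w : Fin (2 * n) → Bool) : Option (Fin (2 * n)) → Prop
  | none => True
  | some i => w i = true

/-- The level (distance to the root) of a node. -/
def nodeLevel (n : ℕ) (w : Fin (2 * n) → Bool) : Option (Fin (2 * n)) → ℤ
  | none => 0
  | some i => heightAt (2 * n) w ((i : ℕ) + 1)

/-- The set of nodes at level `ℓ` of the tree encoded by `w`. -/
noncomputable def nodesAtLevel (n : ℕ) (w : Fin (2 * n) → Bool) (ℓ : ℕ) :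
    Finset (Option (Fin (2 * n))) :=
  Finset.univ.filter (fun v => isNode n w v ∧ nodeLevel n w v = (ℓ : ℤ))

/-- The number of nodes visited before the given node in the depth-first (pre-order)
traversal: the root comes first, and the non-root nodes appear in the order of their
up-steps in the Dyck word. -/
noncomputable def dfsScore (n : ℕ) (w : Fin (2 * n) → Bool) : Option (Fin (2 * n)) → ℕ
  | none => 0
  | some i => 1 +
      (Finset.univ.filter (fun j : Fin (2 * n) => (j : ℕ) < (i : ℕ) ∧ w j = true)).card

/-- The number of nodes visited before the given node in breadth-first search:
nodes are visited level by level, and from left to right within a level. -/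
noncomputable def bfsScore (n : ℕ) (w : Fin (2 * n) → Bool) : Option (Fin (2 * n)) → ℕ
  | none => 0
  | some i => 1 +
      (Finset.univ.filter (fun j : Fin (2 * n) =>
        w j = true ∧ (nodeLevel n w (some j) < nodeLevel n w (some i) ∨
          (nodeLevel n w (some j) = nodeLevel n w (some i) ∧ (j : ℕ) < (i : ℕ))))).card

/-- Sum of the dfs scores of all nodes at level `ℓ` over all ordered trees with `n` edges. -/
noncomputable def totalD (n ℓ : ℕ) : ℕ :=
  ∑ w ∈ dyckWords n, ∑ v ∈ nodesAtLevel n w ℓ, dfsScore n w v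

/-- Sum of the bfs scores of all nodes at level `ℓ` over all ordered trees with `n` edges. -/
noncomputable def totalB (n ℓ : ℕ) : ℕ :=
  ∑ w ∈ dyckWords n, ∑ v ∈ nodesAtLevel n w ℓ, bfsScore n w v

/-- Total number of nodes at level `ℓ` among all ordered trees with `n` edges. -/
noncomputable def levelCount (n ℓ : ℕ) : ℕ :=
  ∑ w ∈ dyckWords n, (nodesAtLevel n w ℓ).card

/-! Append a down-step to the Dyck word of a tree with `n` edges. A node at level `ℓ` that is
entered by the `s`-th step cuts the resulting path from `0` to `-1` into pieces of `s` and
`2 * n + 1 - s` steps. The last visits to the levels `0, …, ℓ - 1` divide the first piece into `ℓ`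
blocks, and the first visits to the levels `ℓ - 1, …, -1` divide the second into `ℓ + 1` blocks. Up
to reversal in time, each block is a Dyck word followed by a single step. These `2 * ℓ + 1` blocks
are exchangeable, so on average `s` is `ℓ / (2 * ℓ + 1) * (2 * n + 1)`; and
`2 * dfsScore = s + ℓ`, because the first `s` steps climb to height `ℓ`.

If `F` is the generating function of the blocks, the pairs of pieces are counted by the coefficients
of `F ^ ℓ * F ^ (ℓ + 1)`, and exchangeability becomes the proportionality of the derivatives
`(F ^ ℓ)' * F ^ (ℓ + 1)` and `(F ^ (2 * ℓ + 1))'`. -/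

open Finset PowerSeries

section PowerSeries

variable {R : Type*} [CommSemiring R]

lemma coeff_X_mul_derivative (f : R⟦X⟧) (m : ℕ) : coeff m (X * d⁄dX R f) = m * coeff m f := by
  cases m with
  | zero => simp
  | succ m => rw [coeff_succ_X_mul, coeff_derivative, mul_comm, Nat.cast_succ]

lemma add_mul_sum_antidiagonal_fst_mul_coeff_pow (f : R⟦X⟧) (a b m : ℕ) :
    (a + b) * ∑ p ∈ antidiagonal m, (p.1 : R) * (coeff p.1 (f ^ a) * coeff p.2 (f ^ b)) =
      a * (m * coeff m (f ^ (a + b))) := by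
  have leibniz : (a + b) • (X * d⁄dX R (f ^ a) * f ^ b) = a • (X * d⁄dX R (f ^ (a + b))) := by
    rw [derivative_pow, derivative_pow, nsmul_eq_mul, nsmul_eq_mul]
    cases a with
    | zero => simp
    | succ a =>
      rw [show a + 1 - 1 = a from rfl, show a + 1 + b - 1 = a + b by omega, pow_add]
      ring
  have coeff_leibniz := congrArg (coeff m) leibniz
  rw [map_nsmul, map_nsmul, nsmul_eq_mul, nsmul_eq_mul, coeff_X_mul_derivative, coeff_mul]
    at coeff_leibniz
  simpa only [coeff_X_mul_derivative, mul_assoc, Nat.cast_add] using coeff_leibniz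

end PowerSeries

section Height

variable {n : ℕ} (w : Fin n → Bool)

lemma card_up_add_card_down {k : ℕ} (hk : k ≤ n) :
    #{i : Fin n | (i : ℕ) < k ∧ w i = true} + #{i : Fin n | (i : ℕ) < k ∧ w i = false} = k := by
  simp only [← Bool.not_eq_true, ← filter_filter]
  rw [card_filter_add_card_filter_not, Fin.card_filter_val_lt, min_eq_right hk]

lemma two_mul_card_up {k : ℕ} (hk : k ≤ n) :
    2 * (#{i : Fin n | (i : ℕ) < k ∧ w i = true} : ℤ) = k + heightAt n w k := by
  have := card_up_add_card_down w hk
  unfold heightAt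
  omega

lemma heightAt_eq_sum (k : ℕ) :
    heightAt n w k = ∑ i : Fin n, if (i : ℕ) < k then (if w i = true then 1 else -1) else 0 := by
  rw [heightAt, card_filter, card_filter]
  push_cast
  rw [← sum_sub_distrib]
  refine sum_congr rfl fun i _ => ?_
  cases w i <;> by_cases (i : ℕ) < k <;> simp [*]

@[simp]
lemma heightAt_zero : heightAt n w 0 = 0 := by
  simp [heightAt]

lemma heightAt_cons_succ (b : Bool) (k : ℕ) :
    heightAt (n + 1) (Fin.cons b w) (k + 1) = (if b = true then 1 else -1) + heightAt n w k := by
  rw [heightAt_eq_sum, heightAt_eq_sum, Fin.sum_univ_succ]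
  simp

end Height

lemma card_filter_fin_cons {α : Type*} [Fintype α] {m : ℕ} (P : (Fin (m + 1) → α) → Prop)
    [DecidablePred P] :
    #{w | P w} = ∑ a, #{w : Fin m → α | P (Fin.cons a w)} := by
  simp only [card_filter]
  rw [← (Fin.consEquiv fun _ => α).sum_comp, Fintype.sum_prod_type]
  rfl

section PathCount

/-- The `±1` path with steps `w` that starts at height `h` ends at height `k` and never goes below
`0`. Heights are integers so that recurrences need no case distinction at the boundary. -/
def IsNonnegPath {m : ℕ} (h k : ℤ) (w : Fin m → Bool) : Prop :=
  (∀ j ≤ m, 0 ≤ h + heightAt m w j) ∧ h + heightAt m w m = k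

/-- The number of nonnegative paths with `m` steps from height `h` to height `k`. -/
noncomputable def pathCount (m : ℕ) (h k : ℤ) : ℕ :=
  #{w : Fin m → Bool | IsNonnegPath h k w}

lemma isNonnegPath_cons {m : ℕ} {h k : ℤ} {b : Bool} {w : Fin m → Bool} :
    IsNonnegPath h k (Fin.cons b w : Fin (m + 1) → Bool) ↔
      0 ≤ h ∧ IsNonnegPath (h + if b = true then 1 else -1) k w := by
  have forall_le_succ : (∀ j ≤ m + 1, 0 ≤ h + heightAt (m + 1) (Fin.cons b w) j) ↔
      0 ≤ h ∧ ∀ j ≤ m, 0 ≤ h + heightAt (m + 1) (Fin.cons b w) (j + 1) := by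
    rw [← Nat.and_forall_add_one]
    simp
  simp only [IsNonnegPath, forall_le_succ, heightAt_cons_succ, add_assoc, and_assoc]

lemma pathCount_zero (h k : ℤ) : pathCount 0 h k = if 0 ≤ h ∧ h = k then 1 else 0 := by
  simp only [pathCount, IsNonnegPath, card_filter, nonpos_iff_eq_zero, forall_eq, heightAt_zero,
    add_zero, Fintype.sum_unique]

lemma pathCount_succ (m : ℕ) (h k : ℤ) :
    pathCount (m + 1) h k =
      if 0 ≤ h then pathCount m (h + 1) k + pathCount m (h - 1) k else 0 := by
  simp only [pathCount, card_filter_fin_cons, isNonnegPath_cons, Fintype.sum_bool]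
  by_cases hh : 0 ≤ h <;> simp [hh, sub_eq_add_neg]

lemma pathCount_of_neg (m : ℕ) {h : ℤ} (hh : h < 0) (k : ℤ) : pathCount m h k = 0 := by
  cases m <;> simp [pathCount_zero, pathCount_succ, hh.not_ge]

lemma pathCount_succ' (m : ℕ) (h k : ℤ) :
    pathCount (m + 1) h k =
      if 0 ≤ k then pathCount m h (k + 1) + pathCount m h (k - 1) else 0 := by
  induction m generalizing h with
  | zero => simp only [pathCount_succ, pathCount_zero]; grind
  | succ m ih =>
    rw [pathCount_succ, ih, ih, pathCount_succ m h, pathCount_succ m h]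
    split_ifs <;> omega

lemma pathCount_comm (m : ℕ) (h k : ℤ) : pathCount m h k = pathCount m k h := by
  induction m generalizing h k with
  | zero => simp only [pathCount_zero]; grind
  | succ m ih => rw [pathCount_succ', pathCount_succ, ih h, ih h]

lemma pathCount_pos (h d : ℕ) : 0 < pathCount (h + 2 * d) h 0 := by
  induction d generalizing h with
  | zero =>
    induction h with
    | zero => simp [pathCount_zero]
    | succ h ih =>
      rw [show h + 1 + 2 * 0 = h + 2 * 0 + 1 by ring, pathCount_succ, if_pos (by positivity)]
      exact Nat.add_pos_right _ (by simpa using ih)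
  | succ d ih =>
    rw [show h + 2 * (d + 1) = h + 1 + 2 * d + 1 by ring, pathCount_succ, if_pos (by positivity)]
    exact Nat.add_pos_left (ih (h + 1)) _

lemma card_isNonnegPath_up_step {m : ℕ} (i : Fin m) (h k ℓ : ℤ) :
    #{w : Fin m → Bool | IsNonnegPath h k w ∧ w i = true ∧ h + heightAt m w (i + 1) = ℓ} =
      pathCount i h (ℓ - 1) * pathCount i.rev ℓ k := by
  induction m generalizing h with
  | zero => exact i.elim0
  | succ m ih =>
    rw [card_filter_fin_cons, Fintype.sum_bool]
    simp only [isNonnegPath_cons, heightAt_cons_succ]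
    cases i using Fin.cases with
    | zero =>
      by_cases hℓ : 0 ≤ h ∧ h + 1 = ℓ
      · obtain ⟨hh, rfl⟩ := hℓ
        simp [hh, pathCount_zero]
        rfl
      · have : ¬(0 ≤ h ∧ h = ℓ - 1) := by omega
        simp only [Fin.val_zero, pathCount_zero, if_neg this, zero_mul]
        simp only [Fin.cons_zero, heightAt_zero, add_zero, Bool.false_eq_true, false_and, and_false,
          filter_false, card_empty, if_true, true_and, card_eq_zero, filter_eq_empty_iff]
        grind
    | succ i =>
      simp only [Fin.cons_succ, Fin.val_succ, Fin.rev_succ, Fin.val_castSucc, pathCount_succ,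
        ← add_assoc]
      by_cases hh : 0 ≤ h
      · rw [if_pos hh, add_mul, ← ih, ← ih]
        simp [hh, sub_eq_add_neg]
      · simp [hh]

end PathCount

section FirstPassage

/-- The generating function, by length, of the `±1` paths from `0` that reach `-1` with their last
step and not before: a Dyck word followed by a down-step. -/
noncomputable def firstPassageSeries : ℚ⟦X⟧ :=
  X * expand 2 two_ne_zero (catalanSeries.map (Nat.castRingHom ℚ))

lemma firstPassageSeries_eq : firstPassageSeries = X * (1 + firstPassageSeries ^ 2) := by
  have catalan_eq := congrArg (expand 2 two_ne_zero <| map (Nat.castRingHom ℚ) ·)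
    catalanSeries_sq_mul_X_add_one
  simp only [map_add, map_mul, map_pow, map_one, map_X, expand_X] at catalan_eq
  unfold firstPassageSeries
  linear_combination -X * catalan_eq

lemma coeff_succ_firstPassageSeries_pow_succ (m h : ℕ) :
    coeff (m + 1) (firstPassageSeries ^ (h + 1)) =
      coeff m (firstPassageSeries ^ h) + coeff m (firstPassageSeries ^ (h + 2)) := by
  have pow_eq : firstPassageSeries ^ (h + 1) =
      X * (firstPassageSeries ^ h + firstPassageSeries ^ (h + 2)) := by
    linear_combination firstPassageSeries ^ h * firstPassageSeries_eq
  rw [pow_eq, coeff_succ_X_mul, map_add]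

lemma coeff_zero_firstPassageSeries_pow (h : ℕ) :
    coeff 0 (firstPassageSeries ^ h) = if h = 0 then 1 else 0 := by
  simp [firstPassageSeries, zero_pow_eq]

-- A path from `h - 1` to `-1` splits into one first passage for each of the `h` levels it leaves.
lemma pathCount_eq_coeff_firstPassageSeries (m h : ℕ) :
    (pathCount m (h - 1) 0 : ℚ) = coeff (m + 1) (firstPassageSeries ^ h) := by
  induction m generalizing h with
  | zero =>
    cases h with
    | zero => simp [pathCount_of_neg, coeff_one]
    | succ h =>
      simp [coeff_succ_firstPassageSeries_pow_succ, coeff_zero_firstPassageSeries_pow,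
        pathCount_zero]
  | succ m ih =>
    cases h with
    | zero => simp [pathCount_of_neg, coeff_one]
    | succ h =>
      rw [coeff_succ_firstPassageSeries_pow_succ, ← ih, ← ih, pathCount_succ, if_pos (by simp),
        add_comm]
      push_cast
      ring_nf

end FirstPassage

section Trees

/-- The number of steps of the preorder walk of a tree up to and including the step that first
reaches the given node. -/
def entryTime {m : ℕ} : Option (Fin m) → ℕ
  | none => 0
  | some i => i + 1

lemma sum_entryTime {M : Type*} [AddCommMonoid M] (m : ℕ) (g : ℕ → M) :
    ∑ v : Option (Fin m), g (entryTime v) = ∑ s ∈ range (m + 1), g s := by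
  rw [Fintype.sum_option, sum_range_succ', sum_range, add_comm]
  rfl

variable {n ℓ : ℕ} {w : Fin (2 * n) → Bool} {v : Option (Fin (2 * n))} {i : Fin (2 * n)}

lemma isDyck_iff_isNonnegPath : IsDyck n w ↔ IsNonnegPath 0 0 w := by
  have total : #{i | w i = true} = n ↔ heightAt (2 * n) w (2 * n) = 0 := by
    have := two_mul_card_up w le_rfl
    simp only [Fin.is_lt, true_and] at this
    omega
  simp only [IsDyck, IsNonnegPath, total, zero_add, and_comm]

lemma dfsScore_some (hi : w i = true) :
    dfsScore n w (some i) = #{j : Fin (2 * n) | (j : ℕ) < i + 1 ∧ w j = true} := by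
  have insert_up : univ.filter (fun j : Fin (2 * n) => (j : ℕ) < i + 1 ∧ w j = true) =
      insert i (univ.filter fun j : Fin (2 * n) => (j : ℕ) < i ∧ w j = true) := by
    ext j
    simp only [mem_filter_univ, mem_insert]
    grind
  rw [insert_up, card_insert_of_notMem (by simp), add_comm, dfsScore]

lemma two_mul_dfsScore (hv : isNode n w v) :
    2 * (dfsScore n w v : ℤ) = entryTime v + nodeLevel n w v := by
  cases v with
  | none => simp [dfsScore, entryTime, nodeLevel]
  | some i =>
    rw [dfsScore_some hv]
    exact two_mul_card_up w i.is_lt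

lemma mem_nodesAtLevel : v ∈ nodesAtLevel n w ℓ ↔ isNode n w v ∧ nodeLevel n w v = ℓ :=
  mem_filter_univ v

lemma none_mem_nodesAtLevel : none ∈ nodesAtLevel n w ℓ ↔ ℓ = 0 := by
  rw [mem_nodesAtLevel, isNode, nodeLevel, true_and, eq_comm, Nat.cast_eq_zero]

lemma some_mem_nodesAtLevel :
    some i ∈ nodesAtLevel n w ℓ ↔ w i = true ∧ heightAt (2 * n) w (i + 1) = ℓ := by
  rw [mem_nodesAtLevel, isNode, nodeLevel]

lemma card_dyckWords_mem_nodesAtLevel (n ℓ : ℕ) (v : Option (Fin (2 * n))) :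
    (#{w ∈ dyckWords n | v ∈ nodesAtLevel n w ℓ} : ℚ) =
      coeff (entryTime v) (firstPassageSeries ^ ℓ) *
        coeff (2 * n + 1 - entryTime v) (firstPassageSeries ^ (ℓ + 1)) := by
  simp only [dyckWords, filter_filter, isDyck_iff_isNonnegPath]
  cases v with
  | none =>
    simp only [none_mem_nodesAtLevel, entryTime, coeff_zero_firstPassageSeries_pow, Nat.sub_zero]
    split_ifs with hℓ
    · simpa [hℓ, pathCount] using pathCount_eq_coeff_firstPassageSeries (2 * n) 1
    · simp [hℓ]
  | some i =>
    have marked := card_isNonnegPath_up_step i 0 0 ℓ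
    have rev_succ : 2 * n + 1 - (i + 1) = i.rev + 1 := by rw [Fin.val_rev]; omega
    simp only [zero_add] at marked
    simp only [some_mem_nodesAtLevel, entryTime]
    rw [marked, rev_succ, ← pathCount_eq_coeff_firstPassageSeries,
      ← pathCount_eq_coeff_firstPassageSeries, pathCount_comm i]
    simp

lemma sum_nodesAtLevel (n ℓ : ℕ) (g : ℕ → ℚ) :
    ∑ w ∈ dyckWords n, ∑ v ∈ nodesAtLevel n w ℓ, g (entryTime v) =
      ∑ p ∈ antidiagonal (2 * n + 1), g p.1 *
        (coeff p.1 (firstPassageSeries ^ ℓ) * coeff p.2 (firstPassageSeries ^ (ℓ + 1))) := by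
  calc
    _ = ∑ v, g (entryTime v) * #{w ∈ dyckWords n | v ∈ nodesAtLevel n w ℓ} := by
      rw [sum_comm' (t' := univ) (s' := fun v => {w ∈ dyckWords n | v ∈ nodesAtLevel n w ℓ})
        (by simp)]
      simp [mul_comm]
    _ = ∑ s ∈ range (2 * n + 1), g s * (coeff s (firstPassageSeries ^ ℓ) *
          coeff (2 * n + 1 - s) (firstPassageSeries ^ (ℓ + 1))) := by
      simp only [card_dyckWords_mem_nodesAtLevel]
      exact sum_entryTime (2 * n) fun s => g s * (coeff s (firstPassageSeries ^ ℓ) *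
        coeff (2 * n + 1 - s) (firstPassageSeries ^ (ℓ + 1)))
    _ = _ := by
      rw [Nat.sum_antidiagonal_eq_sum_range_succ_mk, sum_range_succ _ (2 * n + 1)]
      simp [coeff_zero_firstPassageSeries_pow]

lemma levelCount_eq_coeff (n ℓ : ℕ) :
    (levelCount n ℓ : ℚ) = coeff (2 * n + 1) (firstPassageSeries ^ (ℓ + (ℓ + 1))) := by
  rw [pow_add, coeff_mul]
  simpa [levelCount] using sum_nodesAtLevel n ℓ fun _ => 1

lemma levelCount_eq_pathCount (n ℓ : ℕ) : levelCount n ℓ = pathCount (2 * n) (2 * ℓ) 0 := by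
  have := pathCount_eq_coeff_firstPassageSeries (2 * n) (ℓ + (ℓ + 1))
  rw [← levelCount_eq_coeff, Nat.cast_inj] at this
  rw [← this]
  push_cast
  ring_nf

lemma levelCount_pos (h : ℓ ≤ n) : 0 < levelCount n ℓ := by
  obtain ⟨d, rfl⟩ := Nat.exists_eq_add_of_le h
  rw [levelCount_eq_pathCount, mul_add]
  exact_mod_cast pathCount_pos (2 * ℓ) d

lemma two_mul_totalD (n ℓ : ℕ) :
    2 * totalD n ℓ =
      ∑ w ∈ dyckWords n, ∑ v ∈ nodesAtLevel n w ℓ, entryTime v + ℓ * levelCount n ℓ := by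
  simp only [totalD, levelCount, card_eq_sum_ones, mul_sum, ← sum_add_distrib]
  refine sum_congr rfl fun w _ => sum_congr rfl fun v hv => ?_
  obtain ⟨v_node, v_level⟩ := mem_nodesAtLevel.1 hv
  rw [mul_one]
  exact_mod_cast v_level ▸ two_mul_dfsScore v_node

lemma two_mul_add_one_mul_totalD (n ℓ : ℕ) :
    (2 * ℓ + 1) * totalD n ℓ = ℓ * (n + ℓ + 1) * levelCount n ℓ := by
  have exchange := add_mul_sum_antidiagonal_fst_mul_coeff_pow firstPassageSeries ℓ (ℓ + 1)
    (2 * n + 1)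
  rw [← sum_nodesAtLevel n ℓ fun s => (s : ℚ), ← levelCount_eq_coeff] at exchange
  norm_cast at exchange
  set T := ∑ w ∈ dyckWords n, ∑ v ∈ nodesAtLevel n w ℓ, entryTime v with hT
  refine mul_left_cancel₀ two_ne_zero ?_
  calc
    2 * ((2 * ℓ + 1) * totalD n ℓ) = (2 * ℓ + 1) * (T + ℓ * levelCount n ℓ) := by
      rw [hT, ← two_mul_totalD]; ring
    _ = (ℓ + (ℓ + 1)) * T + (2 * ℓ + 1) * ℓ * levelCount n ℓ := by ring
    _ = ℓ * ((2 * n + 1) * levelCount n ℓ) + (2 * ℓ + 1) * ℓ * levelCount n ℓ := by rw [exchange]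
    _ = 2 * (ℓ * (n + ℓ + 1) * levelCount n ℓ) := by ring

end Trees

/-- The expected dfsScore of a uniformly random node at level ℓ among all ordered trees
with n edges equals (ℓ/(2ℓ+1))·(n+ℓ+1). -/
theorem expected_dfsScore (n ℓ : ℕ) (h : ℓ ≤ n) :
    (totalD n ℓ : ℚ) / (levelCount n ℓ : ℚ) =
      ((ℓ : ℚ) / (2 * ℓ + 1)) * (n + ℓ + 1) := by
  have count_ne_zero : (levelCount n ℓ : ℚ) ≠ 0 := by exact_mod_cast (levelCount_pos h).ne'
  rw [div_mul_eq_mul_div, div_eq_div_iff count_ne_zero (by positivity), mul_comm]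
  exact_mod_cast two_mul_add_one_mul_totalD n ℓ
end

section
/- For all n ≥ 0 and 0 ≤ ℓ ≤ n, totalB(n,ℓ) equals ∑_{k=1}^{⌊(ℓ+1)/2⌋} (−1)^{k−1} k·C(ℓ−k+1, k)·((3ℓ+1)/(n−k+2ℓ+2))·C(2n−2k+ℓ+2, n−ℓ−k+1) − ∑_{k=1}^{⌊ℓ/2⌋} (−1)^{k−1} k·C(ℓ−k, k)·((3ℓ+2)/(n−k+2ℓ+2))·C(2n−2k+ℓ+1, n−ℓ−k). -/
open scoped Classical

/-- Binomial coefficient with an integer lower index: zero when the lower index is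
negative. -/
def ch (N : ℕ) (k : ℤ) : ℚ := if 0 ≤ k then (N.choose k.toNat : ℚ) else 0

/-!
Cutting Dyck words at their first return turns ordered trees into binary trees: the left subtree is
the tree at the first child of the root, the right one is what remains. If an ordered tree has `N_d`
nodes at level `d`, breadth-first search visits all lower levels before level `ℓ`, so the scores
at level `ℓ` add up to `N_ℓ * ∑_{d < ℓ} N_d + C(N_ℓ, 2)`.

Let `C` be the Catalan series and `y = x C² = C - 1`. Splitting off the first child shows that the
total scores at level `ℓ` have generating function `C² y^ℓ ∑_{j < ℓ} ∑_{d ≤ j} y^d`. The inner sums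
are `C^j F_j(x)` for the signed Fibonacci polynomials `F_j = ∑ₖ (-1)ᵏ C(j - k, k) xᵏ`, and the outer
one collapses to `C^ℓ (x F_ℓ' - F_{ℓ+1}' / C)`, because differentiating the Fibonacci recurrence
produces exactly the summand `F_j`. The coefficients of `-F_{ℓ+1}'` and `-F_ℓ'` supply the factors
`(-1)^(k-1) k C(·, k)`, and the ballot formula for the coefficients of powers of `C` the others.
-/

section Ranks

open Finset

lemma sum_card_filter_lt_eq_choose_two {α β : Type*} [LinearOrder β] (s : Finset α) {f : α → β}
    (hf : Set.InjOn f s) : ∑ i ∈ s, #{j ∈ s | f j < f i} = (#s).choose 2 := by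
  induction s using Finset.induction_on_max_value f with
  | empty => simp
  | insert a s ha hmax ih =>
    have hlt : ∀ j ∈ s, f j < f a := fun j hj =>
      (hmax j hj).lt_of_ne fun h => ha <| hf (by simp [hj]) (by simp) h ▸ hj
    have htop : {j ∈ insert a s | f j < f a} = s := by
      rw [filter_insert, if_neg (lt_irrefl _), filter_true_of_mem hlt]
    have hrest : ∀ i ∈ s, {j ∈ insert a s | f j < f i} = {j ∈ s | f j < f i} := fun i hi => by
      rw [filter_insert, if_neg (hlt i hi).not_gt]
    rw [sum_insert ha, htop, sum_congr rfl fun i hi => by rw [hrest i hi],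
      ih (hf.mono (by simp)), card_insert_of_notMem ha, Nat.choose_succ_succ' _ 1,
      Nat.choose_one_right]

end Ranks

section BreadthFirst

open Finset

/-- Position of a node in the pre-order traversal: the root comes before all up-steps. -/
def preorderIndex {m : ℕ} : Option (Fin m) → ℕ
  | none => 0
  | some i => i + 1

lemma preorderIndex_injective {m : ℕ} : Function.Injective (preorderIndex (m := m)) := by
  rintro (_ | i) (_ | j) h <;> simp_all [preorderIndex, Fin.ext_iff]

variable {n : ℕ} {w : Fin (2 * n) → Bool}

lemma nodeLevel_nonneg (hw : IsDyck n w) : ∀ v, 0 ≤ nodeLevel n w v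
  | none => le_rfl
  | some i => hw.2 _ (by omega)

lemma bfsScore_eq_card_precede (hw : IsDyck n w) (v : Option (Fin (2 * n))) :
    bfsScore n w v = #{u | isNode n w u ∧ (nodeLevel n w u < nodeLevel n w v ∨
      nodeLevel n w u = nodeLevel n w v ∧ preorderIndex u < preorderIndex v)} := by
  cases v with
  | none =>
    refine (card_eq_zero.2 <| filter_eq_empty_iff.2 fun u _ => ?_).symm
    rintro ⟨-, h | h⟩
    · exact (nodeLevel_nonneg hw u).not_gt h
    · exact Nat.not_lt_zero _ h.2
  | some i =>
    have root_precedes : nodeLevel n w none < nodeLevel n w (some i) ∨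
        nodeLevel n w none = nodeLevel n w (some i) ∧
          preorderIndex (none : Option (Fin (2 * n))) < preorderIndex (some i) :=
      (nodeLevel_nonneg hw (some i)).lt_or_eq.imp_right fun h => ⟨h, Nat.succ_pos _⟩
    rw [card_filter, Fintype.sum_option, if_pos ⟨trivial, root_precedes⟩, ← card_filter, bfsScore]
    simp only [isNode, preorderIndex, Nat.add_lt_add_iff_right]

lemma card_filter_nodeLevel_lt (hw : IsDyck n w) (ℓ : ℕ) :
    #{u | isNode n w u ∧ nodeLevel n w u < ℓ} = ∑ d ∈ range ℓ, #(nodesAtLevel n w d) := by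
  rw [card_eq_sum_card_fiberwise (f := fun u => (nodeLevel n w u).toNat) (t := range ℓ)]
  · refine sum_congr rfl fun d hd => congrArg card ?_
    ext u
    have := nodeLevel_nonneg hw u
    have := mem_range.1 hd
    simp only [nodesAtLevel, mem_filter, mem_univ, true_and, and_assoc]
    exact and_congr_right fun _ => by omega
  · intro u hu
    have := nodeLevel_nonneg hw u
    have := (mem_filter.1 hu).2.2
    simp only [coe_range, Set.mem_Iio]
    omega

lemma bfsScore_eq_add_card_filter (hw : IsDyck n w) {ℓ : ℕ} {v : Option (Fin (2 * n))}
    (hv : nodeLevel n w v = ℓ) :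
    bfsScore n w v = ∑ d ∈ range ℓ, #(nodesAtLevel n w d) +
      #{u ∈ nodesAtLevel n w ℓ | preorderIndex u < preorderIndex v} := by
  rw [bfsScore_eq_card_precede hw, ← card_filter_nodeLevel_lt hw, ← card_union_of_disjoint]
  · congr 1
    ext u
    simp only [nodesAtLevel, mem_union, mem_filter, mem_univ, true_and, hv]
    tauto
  · rw [nodesAtLevel, filter_filter, disjoint_filter]
    exact fun u _ below same => below.2.ne same.1.2

lemma sum_bfsScore (hw : IsDyck n w) (ℓ : ℕ) :
    ∑ v ∈ nodesAtLevel n w ℓ, bfsScore n w v =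
      #(nodesAtLevel n w ℓ) * ∑ d ∈ range ℓ, #(nodesAtLevel n w d) +
        (#(nodesAtLevel n w ℓ)).choose 2 := by
  rw [sum_congr rfl fun v hv => bfsScore_eq_add_card_filter hw (mem_filter.1 hv).2.2,
    sum_add_distrib, sum_const, smul_eq_mul,
    sum_card_filter_lt_eq_choose_two _ preorderIndex_injective.injOn]

end BreadthFirst

section Trees

open Finset BinaryTree

/-- Number of nodes at a given level of the ordered tree encoded by a binary tree, where `nil` is
the one-node tree and `node () a b` is obtained from the tree of `b` by attaching the tree of `a`
as a new first child of the root. -/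
def levelSize : BinaryTree Unit → ℕ → ℕ
  | _, 0 => 1
  | nil, _ + 1 => 0
  | node _ a b, k + 1 => levelSize a k + levelSize b (k + 1)

lemma levelSize_zero (t : BinaryTree Unit) : levelSize t 0 = 1 := by
  cases t <;> rfl

/-- Number of nodes at levels smaller than `ℓ` of the ordered tree encoded by a binary tree. -/
def lowerCount (t : BinaryTree Unit) (ℓ : ℕ) : ℕ := ∑ d ∈ range ℓ, levelSize t d

/-- Sum of the bfs scores of the nodes at level `ℓ` of the ordered tree encoded by a binary tree:
each of them comes after all lower levels, and ranks within its level add up to a triangular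
number. -/
def bfsTotal (t : BinaryTree Unit) (ℓ : ℕ) : ℕ :=
  levelSize t ℓ * lowerCount t ℓ + (levelSize t ℓ).choose 2

lemma bfsTotal_zero (t : BinaryTree Unit) : bfsTotal t 0 = 0 := by
  simp [bfsTotal, lowerCount, levelSize_zero]

lemma bfsTotal_nil_succ (ℓ : ℕ) : bfsTotal nil (ℓ + 1) = 0 := by
  simp [bfsTotal, levelSize]

lemma lowerCount_node_succ (a b : BinaryTree Unit) (ℓ : ℕ) :
    lowerCount (node () a b) (ℓ + 1) = lowerCount a ℓ + lowerCount b (ℓ + 1) := by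
  simp only [lowerCount, sum_range_succ', levelSize, levelSize_zero, sum_add_distrib, add_assoc]

lemma bfsTotal_node_succ (a b : BinaryTree Unit) (ℓ : ℕ) :
    bfsTotal (node () a b) (ℓ + 1) = bfsTotal a ℓ + bfsTotal b (ℓ + 1) +
      (levelSize a ℓ * lowerCount b (ℓ + 1) + lowerCount a (ℓ + 1) * levelSize b (ℓ + 1)) := by
  have hlow : lowerCount a (ℓ + 1) = lowerCount a ℓ + levelSize a ℓ := sum_range_succ _ _
  rw [bfsTotal, bfsTotal, bfsTotal, lowerCount_node_succ, levelSize, hlow]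
  qify
  simp only [Nat.cast_choose_two]
  push_cast
  ring

end Trees

section DyckWords

open Finset DyckStep

/-- The letters `true` and `false` as up- and down-steps. -/
def stepEquiv : Bool ≃ DyckStep where
  toFun b := bif b then U else D
  invFun s := s = U
  left_inv b := by cases b <;> rfl
  right_inv s := by cases s <;> rfl

/-- A Boolean word as a list of Dyck steps. -/
def stepList {m : ℕ} (w : Fin m → Bool) : List DyckStep := List.ofFn fun i => stepEquiv (w i)

/-- Final height of a lattice path given by its list of steps. -/
def pathHeight (l : List DyckStep) : ℤ := l.count U - l.count D

/-- Number of up-steps ending at height `k` in the lattice path starting at height `0`. -/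
def upStepsTo : List DyckStep → ℤ → ℕ
  | [], _ => 0
  | U :: l, k => (if k = 1 then 1 else 0) + upStepsTo l (k - 1)
  | D :: l, k => upStepsTo l (k + 1)

lemma pathHeight_cons_U (l : List DyckStep) : pathHeight (U :: l) = 1 + pathHeight l := by
  simp only [pathHeight, List.count_cons_self, List.count_cons_of_ne, ne_eq, reduceCtorEq,
    not_false_eq_true, Nat.cast_add, Nat.cast_one]
  ring

lemma pathHeight_cons_D (l : List DyckStep) : pathHeight (D :: l) = -1 + pathHeight l := by
  simp only [pathHeight, List.count_cons_self, List.count_cons_of_ne, ne_eq, reduceCtorEq,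
    not_false_eq_true, Nat.cast_add, Nat.cast_one]
  ring

lemma pathHeight_dyckWord (p : DyckWord) : pathHeight p.toList = 0 := by
  rw [pathHeight, p.count_U_eq_count_D, sub_self]

lemma upStepsTo_append (l₁ l₂ : List DyckStep) (k : ℤ) :
    upStepsTo (l₁ ++ l₂) k = upStepsTo l₁ k + upStepsTo l₂ (k - pathHeight l₁) := by
  induction l₁ generalizing k with
  | nil => simp [upStepsTo, pathHeight]
  | cons s l ih =>
    cases s with
    | U => rw [List.cons_append, upStepsTo, upStepsTo, ih, pathHeight_cons_U, add_assoc, sub_sub]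
    | D =>
      rw [List.cons_append, upStepsTo, upStepsTo, ih, pathHeight_cons_D, ← sub_sub, sub_neg_eq_add]

lemma upStepsTo_nest_add (p q : DyckWord) (k : ℤ) : upStepsTo (p.nest + q).toList k =
    (if k = 1 then 1 else 0) + upStepsTo p.toList (k - 1) + upStepsTo q.toList k := by
  have hlist : (p.nest + q).toList = U :: (p.toList ++ D :: q.toList) := by
    change ([U] ++ p.toList ++ [D]) ++ q.toList = _
    simp
  rw [hlist, upStepsTo, upStepsTo_append, pathHeight_dyckWord, upStepsTo, sub_zero,
    sub_add_cancel, add_assoc]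

lemma upStepsTo_ofTree (t : BinaryTree Unit) (k : ℤ) :
    upStepsTo (DyckWord.ofTree t).toList k = if 0 < k then levelSize t k.toNat else 0 := by
  induction t generalizing k with
  | nil =>
    split_ifs with hk
    · obtain ⟨j, rfl⟩ : ∃ j : ℕ, k = (j + 1 : ℕ) := ⟨k.toNat - 1, by omega⟩
      rfl
    · rfl
  | node u a b iha ihb =>
    rw [DyckWord.ofTree, upStepsTo_nest_add, iha, ihb]
    rcases le_or_gt k 0 with hk | hk
    · rw [if_neg (by omega), if_neg (by omega), if_neg (by omega), if_neg (by omega)]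
    · obtain ⟨j, rfl⟩ : ∃ j : ℕ, k = (j + 1 : ℕ) := ⟨k.toNat - 1, by omega⟩
      cases j with
      | zero => simp [levelSize, levelSize_zero]
      | succ j =>
        rw [if_neg (by omega), if_pos (by omega), if_pos hk, if_pos hk, zero_add, Int.toNat_natCast,
          show (((j + 1 + 1 : ℕ) : ℤ) - 1).toNat = j + 1 by omega, levelSize]

lemma card_filter_lt_eq_count_take {α : Type*} [DecidableEq α] {m : ℕ} (w : Fin m → α) (k : ℕ)
    (a : α) : #{i : Fin m | (i : ℕ) < k ∧ w i = a} = ((List.ofFn w).take k).count a := by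
  induction m generalizing k with
  | zero => simp
  | succ m ih =>
    cases k with
    | zero => simp
    | succ k =>
      rw [List.ofFn_succ, List.take_succ_cons, List.count_cons, ← ih, card_filter,
        Fin.sum_univ_succ, ← card_filter, add_comm]
      simp

variable {m : ℕ}

lemma stepList_succ (w : Fin (m + 1) → Bool) :
    stepList w = stepEquiv (w 0) :: stepList fun i => w i.succ :=
  List.ofFn_succ

lemma length_stepList (w : Fin m → Bool) : (stepList w).length = m :=
  List.length_ofFn

lemma stepList_injective : Function.Injective (stepList (m := m)) :=
  List.ofFn_injective.comp stepEquiv.injective.comp_left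

lemma exists_stepList_eq {l : List DyckStep} (hl : l.length = m) :
    ∃ w : Fin m → Bool, stepList w = l := by
  subst hl
  exact ⟨fun i => stepEquiv.symm (l.get i), by simp [stepList]⟩

lemma card_filter_lt_eq_count_take_stepList (w : Fin m → Bool) (k : ℕ) (b : Bool) :
    #{i : Fin m | (i : ℕ) < k ∧ w i = b} = ((stepList w).take k).count (stepEquiv b) := by
  rw [stepList, ← card_filter_lt_eq_count_take]
  simp only [stepEquiv.injective.eq_iff]

lemma heightAt_eq_pathHeight (w : Fin m → Bool) (k : ℕ) :
    heightAt m w k = pathHeight ((stepList w).take k) := by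
  rw [heightAt, card_filter_lt_eq_count_take_stepList, card_filter_lt_eq_count_take_stepList]
  rfl

lemma heightAt_zero_s17 (w : Fin m → Bool) : heightAt m w 0 = 0 := by
  simp [heightAt]

lemma heightAt_succ (w : Fin (m + 1) → Bool) (k : ℕ) :
    heightAt (m + 1) w (k + 1) = (if w 0 then 1 else -1) + heightAt m (fun i => w i.succ) k := by
  rw [heightAt_eq_pathHeight, heightAt_eq_pathHeight, stepList_succ, List.take_succ_cons]
  cases w 0
  · exact pathHeight_cons_D _
  · exact pathHeight_cons_U _

lemma card_filter_heightAt_eq_upStepsTo (w : Fin m → Bool) (k : ℤ) :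
    #{i : Fin m | w i = true ∧ heightAt m w (i + 1) = k} = upStepsTo (stepList w) k := by
  induction m generalizing k with
  | zero => simp [stepList, upStepsTo]
  | succ m ih =>
    rw [stepList_succ, card_filter, Fin.sum_univ_succ]
    simp only [heightAt_succ, Fin.val_succ, Fin.val_zero, heightAt_zero_s17]
    rw [← card_filter]
    cases w 0
    · simp only [Bool.false_eq_true, false_and, if_false, zero_add, neg_add_eq_iff_eq_add,
        add_comm (1 : ℤ)]
      exact ih _ _
    · simp only [if_true, true_and, add_zero, ← eq_sub_iff_add_eq', eq_comm (a := (1 : ℤ))]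
      exact congrArg _ (ih _ _)

lemma count_U_add_count_D (l : List DyckStep) : l.count U + l.count D = l.length := by
  induction l with
  | nil => rfl
  | cons s l ih => cases s <;> grind

lemma count_U_stepList (w : Fin m → Bool) : (stepList w).count U = #{i | w i = true} := by
  have h := card_filter_lt_eq_count_take_stepList w m true
  rw [List.take_of_length_le (length_stepList w).le] at h
  simp only [Fin.is_lt, true_and] at h
  exact h.symm

variable {n : ℕ}

/-- The word `w` as an element of Mathlib's type of Dyck words. -/
def IsDyck.toDyckWord {w : Fin (2 * n) → Bool} (hw : IsDyck n w) : DyckWord where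
  toList := stepList w
  count_U_eq_count_D := by
    have hU := (count_U_stepList w).trans hw.1
    have hlen := count_U_add_count_D (stepList w)
    rw [length_stepList] at hlen
    omega
  count_D_le_count_U i := by
    have htake : (stepList w).take i = (stepList w).take (min i (2 * n)) := by
      rw [List.take_eq_take_min, length_stepList]
    have hheight := hw.2 (min i (2 * n)) (min_le_right _ _)
    rw [heightAt_eq_pathHeight, ← htake, pathHeight] at hheight
    omega

lemma IsDyck.semilength_toDyckWord {w : Fin (2 * n) → Bool} (hw : IsDyck n w) :
    hw.toDyckWord.semilength = n :=
  (count_U_stepList w).trans hw.1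

lemma exists_toDyckWord_eq {p : DyckWord} (hp : p.semilength = n) :
    ∃ (w : Fin (2 * n) → Bool) (hw : IsDyck n w), hw.toDyckWord = p := by
  have hlen : p.toList.length = 2 * n := by rw [← p.two_mul_semilength_eq_length, hp]
  obtain ⟨w, hwp⟩ := exists_stepList_eq hlen
  refine ⟨w, ⟨?_, fun k _ => ?_⟩, DyckWord.ext hwp⟩
  · rw [← count_U_stepList, hwp]
    exact hp
  · have := p.count_D_le_count_U k
    rw [heightAt_eq_pathHeight, hwp, pathHeight]
    omega

lemma IsDyck.card_nodesAtLevel {w : Fin (2 * n) → Bool} (hw : IsDyck n w) (ℓ : ℕ) :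
    #(nodesAtLevel n w ℓ) = levelSize hw.toDyckWord.toTree ℓ := by
  have hup : #{i | w i = true ∧ heightAt (2 * n) w (i + 1) = ℓ} =
      if 0 < ℓ then levelSize hw.toDyckWord.toTree ℓ else 0 := by
    rw [card_filter_heightAt_eq_upStepsTo, show stepList w = hw.toDyckWord.toList from rfl,
      ← DyckWord.ofTree_toTree hw.toDyckWord, upStepsTo_ofTree, DyckWord.toTree_ofTree]
    simp
  have hroot : #(nodesAtLevel n w ℓ) =
      (if ℓ = 0 then 1 else 0) + #{i | w i = true ∧ heightAt (2 * n) w (i + 1) = ℓ} := by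
    rw [nodesAtLevel, card_filter, Fintype.sum_option, card_filter]
    have root_iff : isNode n w none ∧ nodeLevel n w none = ℓ ↔ ℓ = 0 := by
      rw [isNode, nodeLevel, true_and, eq_comm, Nat.cast_eq_zero]
    exact congrArg₂ _ (if_congr root_iff rfl rfl)
      (sum_congr rfl fun _ _ => if_congr Iff.rfl rfl rfl)
  rw [hroot, hup]
  cases ℓ <;> simp [levelSize_zero]

lemma IsDyck.sum_bfsScore_eq_bfsTotal {w : Fin (2 * n) → Bool} (hw : IsDyck n w) (ℓ : ℕ) :
    ∑ v ∈ nodesAtLevel n w ℓ, bfsScore n w v = bfsTotal hw.toDyckWord.toTree ℓ := by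
  simp only [sum_bfsScore hw, hw.card_nodesAtLevel, bfsTotal, lowerCount]

theorem totalB_eq_sum_bfsTotal (n ℓ : ℕ) :
    totalB n ℓ = ∑ t ∈ BinaryTree.treesOfNumNodesEq n, bfsTotal t ℓ := by
  have isDyck_of_mem {w} (hw : w ∈ dyckWords n) : IsDyck n w := (mem_filter.1 hw).2
  refine sum_bij (fun w hw => (isDyck_of_mem hw).toDyckWord.toTree) (fun w hw => ?_)
    (fun w hw w' hw' h => ?_) (fun t ht => ?_)
    fun w hw => (isDyck_of_mem hw).sum_bfsScore_eq_bfsTotal ℓ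
  · rw [BinaryTree.mem_treesOfNumNodesEq, DyckWord.numNodes_toTree, IsDyck.semilength_toDyckWord]
  · exact stepList_injective (congrArg DyckWord.toList (DyckWord.equivTree.injective h))
  · rw [BinaryTree.mem_treesOfNumNodesEq, ← DyckWord.toTree_ofTree t,
      DyckWord.numNodes_toTree] at ht
    obtain ⟨w, hw, hwt⟩ := exists_toDyckWord_eq ht
    exact ⟨w, mem_filter.2 ⟨mem_univ _, hw⟩, by rw [hwt, DyckWord.toTree_ofTree]⟩

end DyckWords

section GeneratingFunctions

open Finset BinaryTree PowerSeries

variable {R : Type*} [CommRing R]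

/-- Generating function, by number of nodes, of a weight on binary trees. -/
noncomputable def treeSeries (f : BinaryTree Unit → R) : R⟦X⟧ :=
  mk fun n => ∑ t ∈ treesOfNumNodesEq n, f t

/-- Generating function, by total number of nodes, of a weight on pairs of binary trees. -/
noncomputable def treePairSeries (f : BinaryTree Unit → BinaryTree Unit → R) : R⟦X⟧ :=
  mk fun n => ∑ ij ∈ antidiagonal n,
    ∑ a ∈ treesOfNumNodesEq ij.1, ∑ b ∈ treesOfNumNodesEq ij.2, f a b

lemma treeSeries_eq_C_add_X_mul (f : BinaryTree Unit → R) :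
    treeSeries f = C (f nil) + X * treePairSeries fun a b => f (node () a b) := by
  ext n
  cases n with
  | zero => simp [treeSeries]
  | succ n =>
    simp only [treeSeries, treePairSeries, map_add, coeff_mk, coeff_succ_X_mul, coeff_C,
      Nat.succ_ne_zero, if_false, zero_add]
    rw [treesOfNumNodesEq_succ, sum_biUnion]
    · refine sum_congr rfl fun ij _ => ?_
      rw [sum_map, sum_product]
      rfl
    · simp_rw [Set.PairwiseDisjoint, Set.Pairwise, disjoint_left]
      aesop

lemma treePairSeries_mul (f g : BinaryTree Unit → R) :
    (treePairSeries fun a b => f a * g b) = treeSeries f * treeSeries g := by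
  ext n
  simp only [treeSeries, treePairSeries, coeff_mk, coeff_mul, sum_mul_sum]

lemma treePairSeries_add (f g : BinaryTree Unit → BinaryTree Unit → R) :
    (treePairSeries fun a b => f a b + g a b) = treePairSeries f + treePairSeries g := by
  ext n
  simp only [treePairSeries, coeff_mk, map_add, sum_add_distrib]

lemma treeSeries_sum {ι : Type*} (s : Finset ι) (f : ι → BinaryTree Unit → R) :
    (treeSeries fun t => ∑ i ∈ s, f i t) = ∑ i ∈ s, treeSeries (f i) := by
  ext n
  simp only [treeSeries, coeff_mk, map_sum]
  exact sum_comm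

variable (R) in
/-- The Catalan generating function with coefficients in `R`. -/
noncomputable def catalanGF : R⟦X⟧ := catalanSeries.map (Nat.castRingHom R)

variable (R) in
/-- The ratio of the generating functions of the sizes of two consecutive levels. -/
noncomputable def levelRatio : R⟦X⟧ := X * catalanGF R ^ 2

lemma catalanGF_eq_one_add_levelRatio : catalanGF R = 1 + levelRatio R := by
  have h := congrArg (PowerSeries.map (Nat.castRingHom R)) catalanSeries_sq_mul_X_add_one
  simp only [map_add, map_mul, map_pow, map_X, map_one] at h
  rw [levelRatio, mul_comm X, add_comm]
  exact h.symm

lemma treeSeries_one : (treeSeries fun _ => (1 : R)) = catalanGF R := by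
  ext n
  simp [treeSeries, catalanGF, treesOfNumNodesEq_card_eq_catalan]

/-- Summing `g` along the right spine of a tree multiplies its generating function by the
series `X * C` of spines, because `C * (1 - X * C) = 1`. -/
lemma treeSeries_of_node_eq_add {f : BinaryTree Unit → R}
    {g : BinaryTree Unit → BinaryTree Unit → R} (hnil : f nil = 0)
    (hnode : ∀ a b, f (node () a b) = f b + g a b) :
    treeSeries f = X * catalanGF R * treePairSeries g := by
  have hrec : treeSeries f = X * (catalanGF R * treeSeries f + treePairSeries g) := by
    conv_lhs => rw [treeSeries_eq_C_add_X_mul, hnil, map_zero, zero_add]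
    rw [← treeSeries_one, ← treePairSeries_mul, ← treePairSeries_add]
    simp only [hnode, one_mul]
  have hC := catalanGF_eq_one_add_levelRatio (R := R)
  rw [levelRatio] at hC
  linear_combination catalanGF R * hrec - treeSeries f * hC

lemma treeSeries_levelSize (k : ℕ) :
    (treeSeries fun t => (levelSize t k : R)) = catalanGF R * levelRatio R ^ k := by
  induction k with
  | zero => simp only [levelSize_zero, Nat.cast_one, treeSeries_one, pow_zero, mul_one]
  | succ k ih =>
    have first_child := treeSeries_of_node_eq_add (f := fun t => (levelSize t (k + 1) : R))
      (g := fun a _ => (levelSize a k : R) * 1) (by simp [levelSize])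
      fun a b => by simp [levelSize, add_comm]
    rw [treePairSeries_mul, ih, treeSeries_one] at first_child
    rw [first_child, pow_succ, levelRatio]
    ring

lemma treeSeries_lowerCount (ℓ : ℕ) :
    (treeSeries fun t => (lowerCount t ℓ : R)) =
      catalanGF R * ∑ d ∈ range ℓ, levelRatio R ^ d := by
  simp only [lowerCount, Nat.cast_sum, treeSeries_sum, treeSeries_levelSize, mul_sum]

lemma treeSeries_bfsTotal_succ (ℓ : ℕ) :
    (treeSeries fun t => (bfsTotal t (ℓ + 1) : R)) =
      levelRatio R * (treeSeries fun t => (bfsTotal t ℓ : R)) +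
        catalanGF R ^ 2 * levelRatio R ^ (ℓ + 1) * ∑ d ∈ range (ℓ + 1), levelRatio R ^ d := by
  have first_child := treeSeries_of_node_eq_add (f := fun t => (bfsTotal t (ℓ + 1) : R))
    (g := fun a b => (bfsTotal a ℓ : R) * 1 + ((levelSize a ℓ : R) * lowerCount b (ℓ + 1) +
      (lowerCount a (ℓ + 1) : R) * levelSize b (ℓ + 1)))
    (by rw [bfsTotal_nil_succ, Nat.cast_zero])
    fun a b => by rw [bfsTotal_node_succ]; push_cast; ring
  simp only [treePairSeries_add, treePairSeries_mul, treeSeries_levelSize, treeSeries_lowerCount,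
    treeSeries_one] at first_child
  rw [first_child]
  have hC := catalanGF_eq_one_add_levelRatio (R := R)
  generalize treeSeries (fun t => (bfsTotal t ℓ : R)) = B
  generalize ∑ d ∈ range (ℓ + 1), levelRatio R ^ d = S
  have hy : X * catalanGF R ^ 2 = levelRatio R := rfl
  linear_combination (B + catalanGF R * levelRatio R ^ ℓ * S * (1 + levelRatio R)) * hy
    - catalanGF R * levelRatio R ^ (ℓ + 1) * S * hC

lemma treeSeries_bfsTotal (ℓ : ℕ) :
    (treeSeries fun t => (bfsTotal t ℓ : R)) = catalanGF R ^ 2 * levelRatio R ^ ℓ *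
      ∑ j ∈ range ℓ, ∑ d ∈ range (j + 1), levelRatio R ^ d := by
  induction ℓ with
  | zero =>
    ext n
    simp [bfsTotal_zero, treeSeries]
  | succ ℓ ih =>
    rw [treeSeries_bfsTotal_succ, ih,
      sum_range_succ (fun j => ∑ d ∈ range (j + 1), levelRatio R ^ d)]
    ring

end GeneratingFunctions

section Fibonacci

open Finset PowerSeries

variable {R : Type*} [CommRing R]

variable (R) in
/-- The signed Fibonacci polynomial `∑ₖ (-1)ᵏ C(ℓ - k, k) xᵏ`, as a power series. Truncated
subtraction is harmless: for `k > ℓ` the coefficient is `C(0, k) = 0`. -/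
noncomputable def signedFib (ℓ : ℕ) : R⟦X⟧ := mk fun k => (-1) ^ k * ((ℓ - k).choose k : R)

lemma signedFib_zero : signedFib R 0 = 1 := by
  ext (_ | k) <;> simp [signedFib, coeff_one]

lemma signedFib_one : signedFib R 1 = 1 := by
  ext (_ | k) <;> simp [signedFib, coeff_one]

lemma signedFib_add_two (ℓ : ℕ) :
    signedFib R (ℓ + 2) = signedFib R (ℓ + 1) - X * signedFib R ℓ := by
  ext (_ | k)
  · simp [signedFib]
  simp only [signedFib, map_sub, coeff_mk, coeff_succ_X_mul, Nat.reduceSubDiff]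
  rcases le_or_gt k ℓ with hk | hk
  · rw [show ℓ + 1 - k = ℓ - k + 1 by omega, Nat.choose_succ_succ']
    push_cast
    ring
  · obtain ⟨j, rfl⟩ : ∃ j, k = j + 1 := ⟨k - 1, by omega⟩
    simp [show ℓ + 1 - (j + 1) = 0 by omega, show ℓ - (j + 1) = 0 by omega]

lemma catalanGF_pow_mul_signedFib (ℓ : ℕ) :
    catalanGF R ^ ℓ * signedFib R ℓ = ∑ d ∈ range (ℓ + 1), levelRatio R ^ d := by
  have hC := catalanGF_eq_one_add_levelRatio (R := R)
  induction ℓ using Nat.twoStepInduction with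
  | zero => simp [signedFib_zero]
  | one => simp [signedFib_one, sum_range_succ, ← hC]
  | more ℓ ih₀ ih₁ =>
    have hgeom : ∑ d ∈ range (ℓ + 3), levelRatio R ^ d =
        catalanGF R * ∑ d ∈ range (ℓ + 2), levelRatio R ^ d -
          levelRatio R * ∑ d ∈ range (ℓ + 1), levelRatio R ^ d := by
      rw [hC, geom_sum_succ', geom_sum_succ' (n := ℓ + 1)]
      ring
    rw [hgeom, ← ih₀, ← ih₁, signedFib_add_two]
    simp only [levelRatio]
    ring

lemma derivative_signedFib_add_two (ℓ : ℕ) :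
    derivative R (signedFib R (ℓ + 2)) =
      derivative R (signedFib R (ℓ + 1)) - signedFib R ℓ - X * derivative R (signedFib R ℓ) := by
  simp only [signedFib_add_two, map_sub, Derivation.leibniz, smul_eq_mul, derivative_X]
  ring

lemma catalanGF_mul_sum_geom_sum (ℓ : ℕ) :
    catalanGF R * ∑ j ∈ range ℓ, ∑ d ∈ range (j + 1), levelRatio R ^ d =
      catalanGF R ^ (ℓ + 1) * X * derivative R (signedFib R ℓ) -
        catalanGF R ^ ℓ * derivative R (signedFib R (ℓ + 1)) := by
  induction ℓ with
  | zero => simp [signedFib_zero, signedFib_one]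
  | succ ℓ ih =>
    rw [sum_range_succ, mul_add, ih, ← catalanGF_pow_mul_signedFib, derivative_signedFib_add_two]
    have hC := catalanGF_eq_one_add_levelRatio (R := R)
    rw [levelRatio] at hC
    linear_combination catalanGF R ^ ℓ * derivative R (signedFib R (ℓ + 1)) * hC

theorem treeSeries_bfsTotal_eq_derivative (ℓ : ℕ) :
    (treeSeries fun t => (bfsTotal t ℓ : R)) =
      X ^ ℓ * catalanGF R ^ (3 * ℓ + 1) * -derivative R (signedFib R (ℓ + 1)) -
        X ^ (ℓ + 1) * catalanGF R ^ (3 * ℓ + 2) * -derivative R (signedFib R ℓ) := by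
  rw [treeSeries_bfsTotal, levelRatio, mul_pow]
  change catalanGF R ^ 2 * _ * ∑ j ∈ range ℓ, ∑ d ∈ range (j + 1), levelRatio R ^ d = _
  linear_combination
    X ^ ℓ * catalanGF R ^ (2 * ℓ + 1) * catalanGF_mul_sum_geom_sum (R := R) ℓ

lemma neg_derivative_signedFib (ℓ : ℕ) :
    -derivative R (signedFib R ℓ) = ∑ k ∈ Icc 1 (ℓ / 2),
      C ((-1) ^ (k - 1) * k * ((ℓ - k).choose k : R)) * X ^ (k - 1) := by
  ext j
  simp only [map_neg, map_sum, coeff_C_mul, coeff_X_pow, coeff_derivative, signedFib, coeff_mk]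
  have hsum : ∀ k ∈ Icc 1 (ℓ / 2), k ≠ j + 1 →
      (-1) ^ (k - 1) * k * ((ℓ - k).choose k : R) * (if j = k - 1 then 1 else 0) = 0 := by
    intro k hk hne
    have := (mem_Icc.1 hk).1
    rw [if_neg (by omega), mul_zero]
  rw [sum_eq_single (j + 1) hsum fun hj => ?_]
  · rw [Nat.add_sub_cancel, if_pos rfl]
    push_cast
    ring
  · rw [mem_Icc] at hj
    rw [Nat.choose_eq_zero_of_lt (by omega)]
    simp

end Fibonacci

section Coefficients

open Finset PowerSeries

lemma two_mul_add_mul_coeff_catalanSeries_pow (m r : ℕ) :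
    (2 * m + r) * coeff m (catalanSeries ^ r) = r * (2 * m + r).choose m := by
  induction m generalizing r with
  | zero => simp
  | succ m ihm =>
    induction r with
    | zero => simp [coeff_one]
    | succ r ihr =>
      have hcat : catalanSeries ^ (r + 1) = catalanSeries ^ r + X * catalanSeries ^ (r + 2) := by
        calc catalanSeries ^ (r + 1)
          _ = catalanSeries ^ r * (catalanSeries ^ 2 * X + 1) := by
            rw [catalanSeries_sq_mul_X_add_one, pow_succ]
          _ = catalanSeries ^ r + X * catalanSeries ^ (r + 2) := by ring
      have hrec : coeff (m + 1) (catalanSeries ^ (r + 1)) =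
          coeff (m + 1) (catalanSeries ^ r) + coeff m (catalanSeries ^ (r + 2)) := by
        rw [hcat, map_add, coeff_succ_X_mul]
      have hchoose := Nat.choose_succ_right_eq (2 * m + r + 2) m
      have ihm := ihm (r + 2)
      rw [show 2 * m + r + 2 - m = m + r + 2 by omega] at hchoose
      rw [← add_assoc] at ihm
      rw [show 2 * (m + 1) + r = 2 * m + r + 2 by ring] at ihr
      rw [hrec, show 2 * (m + 1) + (r + 1) = 2 * m + r + 2 + 1 by ring, Nat.choose_succ_succ']
      refine Nat.eq_of_mul_eq_mul_left (by omega : 0 < 2 * m + r + 2) ?_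
      zify at *
      linear_combination (2 * m + r + 3 : ℤ) * (ihr + ihm) - 2 * hchoose

lemma coeff_catalanGF_pow_succ (m r : ℕ) :
    coeff m (catalanGF ℚ ^ (r + 1)) = (r + 1) / (m + r + 1) * (2 * m + r).choose m := by
  have hcoeff : coeff m (catalanGF ℚ ^ (r + 1)) = (coeff m (catalanSeries ^ (r + 1)) : ℕ) := by
    rw [catalanGF, ← map_pow, coeff_map]
    rfl
  have hballot := two_mul_add_mul_coeff_catalanSeries_pow m (r + 1)
  have hchoose := Nat.choose_mul_succ_eq (2 * m + r) m
  rw [show 2 * m + r + 1 - m = m + r + 1 by omega] at hchoose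
  rw [← add_assoc] at hballot
  rw [hcoeff]
  qify at hballot hchoose
  rw [div_mul_eq_mul_div, eq_div_iff (by positivity)]
  refine mul_left_cancel₀ (by positivity : (2 * m + r + 1 : ℚ) ≠ 0) ?_
  linear_combination (m + r + 1 : ℚ) * hballot - (r + 1 : ℚ) * hchoose

lemma coeff_X_pow_mul_catalanGF_pow_succ (n d r : ℕ) :
    coeff n (X ^ d * catalanGF ℚ ^ (r + 1)) =
      (r + 1) / (n - d + r + 1) * ch (2 * n + r - 2 * d) (n - d) := by
  rw [coeff_X_pow_mul', ch]
  rcases le_or_gt d n with hd | hd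
  · rw [if_pos hd, if_pos (by omega), coeff_catalanGF_pow_succ, Nat.cast_sub hd,
      show 2 * (n - d) + r = 2 * n + r - 2 * d by omega, show ((n : ℤ) - d).toNat = n - d by omega]
  · rw [if_neg hd.not_ge, if_neg (by omega), mul_zero]

lemma coeff_mul_neg_derivative_signedFib (n a r ℓ : ℕ) :
    coeff n (X ^ a * catalanGF ℚ ^ (r + 1) * -derivative ℚ (signedFib ℚ ℓ)) =
      ∑ k ∈ Icc 1 (ℓ / 2), (-1 : ℚ) ^ (k - 1) * k * (ℓ - k).choose k *
        ((r + 1) / (n + r + 2 - a - k)) *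
        ch (2 * n + r + 2 - 2 * a - 2 * k) (n + 1 - a - k) := by
  rw [neg_derivative_signedFib, mul_sum, map_sum]
  refine sum_congr rfl fun k hk => ?_
  obtain ⟨j, rfl⟩ : ∃ j, k = j + 1 := ⟨k - 1, by have := (mem_Icc.1 hk).1; omega⟩
  rw [mul_left_comm, mul_right_comm (X ^ a), ← pow_add, coeff_C_mul,
    coeff_X_pow_mul_catalanGF_pow_succ, ← mul_assoc]
  congr 2
  · push_cast
    ring
  · omega
  · push_cast
    ring

end Coefficients

/-- Alternative alternating-sum formula for totalB(n,ℓ). -/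
theorem totalB_alt (n ℓ : ℕ) (h : ℓ ≤ n) :
    (totalB n ℓ : ℚ) =
      (∑ k ∈ Finset.Icc 1 ((ℓ + 1) / 2),
        (-1 : ℚ) ^ (k - 1) * k * Nat.choose (ℓ - k + 1) k *
          ((3 * ℓ + 1 : ℚ) / (n + 2 * ℓ + 2 - k)) *
          ch (2 * n + ℓ + 2 - 2 * k) ((n : ℤ) - ℓ - k + 1))
      - ∑ k ∈ Finset.Icc 1 (ℓ / 2),
        (-1 : ℚ) ^ (k - 1) * k * Nat.choose (ℓ - k) k *
          ((3 * ℓ + 2 : ℚ) / (n + 2 * ℓ + 2 - k)) *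
          ch (2 * n + ℓ + 1 - 2 * k) ((n : ℤ) - ℓ - k) := by
  have htotal : (totalB n ℓ : ℚ) =
      PowerSeries.coeff n (treeSeries fun t => (bfsTotal t ℓ : ℚ)) := by
    rw [totalB_eq_sum_bfsTotal, treeSeries, PowerSeries.coeff_mk, Nat.cast_sum]
  rw [htotal, treeSeries_bfsTotal_eq_derivative, map_sub, coeff_mul_neg_derivative_signedFib,
    coeff_mul_neg_derivative_signedFib]
  congr 1
  · refine Finset.sum_congr rfl fun k hk => ?_
    have := Finset.mem_Icc.1 hk
    rw [show ℓ + 1 - k = ℓ - k + 1 by omega]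
    congr 2 <;> push_cast <;> first | omega | ring
  · refine Finset.sum_congr rfl fun k _ => ?_
    congr 2 <;> push_cast <;> first | omega | ring
end
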